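/- Let P be a binary partial group and BP_n ⊆ P^n the set of words all of whose full parenthesizations yield defined and equal products. If w = (a_1, ..., a_n) ∈ BP_n, then the concatenated word w†w = (a_n†, ..., a_1†, a_1, ..., a_n) lies in BP_{2n}, and its common product is 1. -/

import Mathlib

/-- A unital partial magma: a partially defined binary operation (encoded via
`Option`) with a two-sided unit. -/
structure UnitalPartialMagma (P : Type*) where
  mul : P → P → Option P
  one : P
  mul_one : ∀ a, mul a one = some a
  one_mul : ∀ a, mul one a = some a

/-- A binary partial group: a unital partial magma where each element has an
inverse `inv a` with: `a*b` defined implies `(inv a)*(a*b)` defined and equal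
to `b`, and `b*a` defined implies `(b*a)*(inv a)` defined and equal to `b`. -/
structure BinaryPartialGroup (P : Type*) extends UnitalPartialMagma P where
  inv : P → P
  inv_left : ∀ a b c, mul a b = some c → mul (inv a) c = some b
  inv_right : ∀ a b c, mul b a = some c → mul c (inv a) = some b

/-- Full parenthesizations of words, as binary trees. -/
inductive PTree : Type where
  | leaf : PTree
  | node : PTree → PTree → PTree

/-- The number of letters a parenthesization applies to. -/
def PTree.size : PTree → Nat
  | .leaf => 1
  | .node l r => l.size + r.size

/-- The mirrored parenthesization. -/
def PTree.mirror : PTree → PTree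
  | .leaf => .leaf
  | .node l r => .node r.mirror l.mirror

/-- The partial iterated multiplication of a word determined by a full
parenthesization. -/
def evalTree {P : Type*} (M : UnitalPartialMagma P) : PTree → List P → Option P
  | .leaf, [a] => some a
  | .leaf, _ => none
  | .node l r, w =>
      (evalTree M l (w.take l.size)).bind fun x =>
        (evalTree M r (w.drop l.size)).bind fun y => M.mul x y

/-- `IsProd M w a` says that every full parenthesization of the word `w` gives a
defined iterated product, and all these products equal `a`; the empty word has
product the unit.  Thus `w ∈ BP_n` iff `∃ a, IsProd M w a`. -/
def IsProd {P : Type*} (M : UnitalPartialMagma P) (w : List P) (a : P) : Prop :=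
  (w = [] → a = M.one) ∧ ∀ t : PTree, t.size = w.length → evalTree M t w = some a

namespace PTree

theorem size_pos (t : PTree) : 0 < t.size := by
  induction t with
  | leaf => simp [size]
  | node l r ihl ihr => simp only [size]; omega

theorem exists_size_eq (n : ℕ) : ∃ t : PTree, t.size = n + 1 := by
  induction n with
  | zero => exact ⟨.leaf, rfl⟩
  | succ n ih =>
    obtain ⟨t, ht⟩ := ih
    exact ⟨.node t .leaf, by simp [size, ht]⟩

theorem exists_size_eq_length {α : Type*} {w : List α} (hw : w ≠ []) :
    ∃ t : PTree, t.size = w.length := by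
  obtain ⟨t, ht⟩ := exists_size_eq (w.length - 1)
  have := List.length_pos_iff.mpr hw
  exact ⟨t, by omega⟩

end PTree

theorem evalTree_node_append {P : Type*} (M : UnitalPartialMagma P) (l r : PTree)
    (u v : List P) (hl : l.size = u.length) :
    evalTree M (.node l r) (u ++ v) =
      (evalTree M l u).bind fun x => (evalTree M r v).bind fun y => M.mul x y := by
  simp [evalTree, hl]

/-- If the letters of a word are the consecutive steps of a path `v`, where steps compose through
`q`, then every parenthesization evaluates to the step between the endpoints. -/
theorem evalTree_of_path {P ι : Type*} (M : UnitalPartialMagma P) (q : ι → ι → P)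
    (hq : ∀ i j k, M.mul (q i j) (q j k) = some (q i k)) (t : PTree) :
    ∀ (w : List P) (v : ℕ → ι), t.size = w.length →
      (∀ m (hm : m < w.length), w[m] = q (v m) (v (m + 1))) →
      evalTree M t w = some (q (v 0) (v w.length)) := by
  induction t with
  | leaf =>
    intro w v hw h
    obtain ⟨a, rfl⟩ := List.length_eq_one_iff.mp hw.symm
    simpa [evalTree] using h 0 (by simp)
  | node l r ihl ihr =>
    intro w v hw h
    simp only [PTree.size] at hw
    have hL := ihl (w.take l.size) v (by simp; omega) (fun m hm => by
      simp only [List.length_take] at hm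
      simpa using h m (by omega))
    have hR := ihr (w.drop l.size) (fun m => v (l.size + m)) (by simp; omega) (fun m hm => by
      simp only [List.length_drop] at hm
      simpa [add_assoc] using h (l.size + m) (by omega))
    have e₁ : (w.take l.size).length = l.size := by simp; omega
    have e₂ : l.size + (w.drop l.size).length = w.length := by simp; omega
    rw [e₁] at hL
    simp only [e₂, add_zero] at hR
    simp [evalTree, hL, hR, hq]

theorem IsProd.unique {P : Type*} {M : UnitalPartialMagma P} {w : List P} {a b : P}
    (ha : IsProd M w a) (hb : IsProd M w b) : a = b := by
  by_cases hw : w = []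
  · rw [ha.1 hw, hb.1 hw]
  · obtain ⟨t, ht⟩ := PTree.exists_size_eq_length hw
    exact Option.some_injective _ ((ha.2 t ht).symm.trans (hb.2 t ht))

theorem isProd_nil {P : Type*} (M : UnitalPartialMagma P) : IsProd M [] M.one :=
  ⟨fun _ => rfl, fun t ht => absurd t.size_pos (by simp [ht])⟩

theorem IsProd.eq_of_singleton {P : Type*} {M : UnitalPartialMagma P} {a b : P}
    (h : IsProd M [a] b) : a = b := by
  simpa [evalTree] using h.2 .leaf rfl

namespace BinaryPartialGroup

variable {P : Type*} (G : BinaryPartialGroup P)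

theorem inv_inv (a : P) : G.inv (G.inv a) = a := by
  have h := G.inv_left _ _ _ (G.inv_left _ _ _ (G.mul_one a))
  rw [G.mul_one] at h
  exact Option.some_injective _ h

theorem inv_one : G.inv G.one = G.one := by
  have h := G.inv_left _ _ _ (G.one_mul G.one)
  rw [G.mul_one] at h
  exact Option.some_injective _ h

variable {G}

theorem mul_left_cancel {a b b' c : P} (h : G.mul a b = some c) (h' : G.mul a b' = some c) :
    b = b' :=
  Option.some_injective _ ((G.inv_left _ _ _ h).symm.trans (G.inv_left _ _ _ h'))

theorem mul_right_cancel {a a' b c : P} (h : G.mul a b = some c) (h' : G.mul a' b = some c) :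
    a = a' :=
  Option.some_injective _ ((G.inv_right _ _ _ h).symm.trans (G.inv_right _ _ _ h'))

theorem exists_isProd_of_append {u v : List P} {a : P}
    (h : IsProd G.toUnitalPartialMagma (u ++ v) a) :
    ∃ x y, IsProd G.toUnitalPartialMagma u x ∧ IsProd G.toUnitalPartialMagma v y ∧
      G.mul x y = some a := by
  by_cases hu : u = []
  · subst hu
    exact ⟨G.one, a, isProd_nil _, by simpa using h, G.one_mul a⟩
  by_cases hv : v = []
  · subst hv
    exact ⟨a, G.one, by simpa using h, isProd_nil _, G.mul_one a⟩
  have key : ∀ s t : PTree, s.size = u.length → t.size = v.length →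
      ∃ x y, evalTree G.toUnitalPartialMagma s u = some x ∧
        evalTree G.toUnitalPartialMagma t v = some y ∧ G.mul x y = some a := by
    intro s t hs ht
    have e := h.2 (.node s t) (by simp [PTree.size, hs, ht])
    rw [evalTree_node_append _ _ _ _ _ hs] at e
    simpa [Option.bind_eq_some_iff] using e
  obtain ⟨s, hs⟩ := PTree.exists_size_eq_length hu
  obtain ⟨t, ht⟩ := PTree.exists_size_eq_length hv
  obtain ⟨x, y, hx, hy, hxy⟩ := key s t hs ht
  refine ⟨x, y, ⟨fun e => absurd e hu, fun s' hs' => ?_⟩,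
    ⟨fun e => absurd e hv, fun t' ht' => ?_⟩, hxy⟩
  · obtain ⟨x', y', hx', hy', hxy'⟩ := key s' t hs' ht
    obtain rfl : y = y' := Option.some_injective _ (hy.symm.trans hy')
    rw [hx', mul_right_cancel hxy hxy']
  · obtain ⟨x', y', hx', hy', hxy'⟩ := key s t' hs ht'
    obtain rfl : x = x' := Option.some_injective _ (hx.symm.trans hx')
    rw [hy', mul_left_cancel hxy hxy']

theorem exists_isProd_drop_take {w : List P} {a : P}
    (h : IsProd G.toUnitalPartialMagma w a) (i j : ℕ) :
    ∃ x, IsProd G.toUnitalPartialMagma ((w.take j).drop i) x := by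
  rw [← List.take_append_drop j w] at h
  obtain ⟨x, -, hx, -, -⟩ := exists_isProd_of_append h
  rw [← List.take_append_drop i (w.take j)] at hx
  obtain ⟨-, y, -, hy, -⟩ := exists_isProd_of_append hx
  exact ⟨y, hy⟩

/-- A word in `BP_n` is the sequence of consecutive steps of a system of composable steps. -/
theorem exists_steps {w : List P} {a : P} (h : IsProd G.toUnitalPartialMagma w a) :
    ∃ q : ℕ → ℕ → P, (∀ i j k, G.mul (q i j) (q j k) = some (q i k)) ∧
      (∀ i, q i i = G.one) ∧ (∀ i j, q j i = G.inv (q i j)) ∧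
      ∀ i (hi : i < w.length), q i (i + 1) = w[i] := by
  choose p hp using exists_isProd_drop_take h
  have hp_mul : ∀ i j k, i ≤ j → j ≤ k → G.mul (p i j) (p j k) = some (p i k) := by
    intro i j k hij hjk
    have e : (w.take k).drop i = (w.take j).drop i ++ (w.take k).drop j := by
      obtain ⟨d, rfl⟩ := Nat.exists_eq_add_of_le hij
      conv_lhs => rw [← List.take_append_drop d ((w.take k).drop i)]
      rw [List.take_drop, List.take_take, List.drop_drop, min_eq_left hjk]
    have hk := hp i k
    rw [e] at hk
    obtain ⟨x, y, hx, hy, hxy⟩ := exists_isProd_of_append hk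
    rwa [hx.unique (hp i j), hy.unique (hp j k)] at hxy
  have hp_self : ∀ i, p i i = G.one := fun i => (hp i i).1 (by simp)
  let q : ℕ → ℕ → P := fun i j => if i ≤ j then p i j else G.inv (p j i)
  have hq_le : ∀ {i j}, i ≤ j → q i j = p i j := fun hij => if_pos hij
  have hq_inv : ∀ i j, q j i = G.inv (q i j) := by
    intro i j
    rcases lt_trichotomy i j with hij | rfl | hij
    · simp [q, hij.le, hij.not_ge]
    · simp [q, hp_self, G.inv_one]
    · simp [q, hij.le, hij.not_ge, G.inv_inv]
  have hq_sorted : ∀ {i j k}, i ≤ j → j ≤ k → G.mul (q i j) (q j k) = some (q i k) := by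
    intro i j k hij hjk
    rw [hq_le hij, hq_le hjk, hq_le (hij.trans hjk), hp_mul i j k hij hjk]
  have swap_left : ∀ {i j k}, G.mul (q i j) (q j k) = some (q i k) →
      G.mul (q j i) (q i k) = some (q j k) := fun {i j k} e => by
    rw [hq_inv i j]; exact G.inv_left _ _ _ e
  have swap_right : ∀ {i j k}, G.mul (q i j) (q j k) = some (q i k) →
      G.mul (q i k) (q k j) = some (q i j) := fun {i j k} e => by
    rw [hq_inv j k]; exact G.inv_right _ _ _ e
  refine ⟨q, fun i j k => ?_, fun i => (hq_le le_rfl).trans (hp_self i), hq_inv, fun i hi => ?_⟩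
  · rcases le_total i j with hij | hij <;> rcases le_total j k with hjk | hjk <;>
      rcases le_total i k with hik | hik
    · exact hq_sorted hij hjk
    · exact hq_sorted hij hjk
    · exact swap_right (hq_sorted hik hjk)
    · exact swap_right (swap_left (hq_sorted hik hij))
    · exact swap_left (hq_sorted hij hik)
    · exact swap_left (swap_right (hq_sorted hjk hik))
    · exact swap_left (swap_right (swap_left (hq_sorted hjk hij)))
    · exact swap_left (swap_right (swap_left (hq_sorted hjk hij)))
  · rw [hq_le (Nat.le_succ i)]
    have e : (w.take (i + 1)).drop i = [w[i]] := by
      rw [List.take_add_one, List.drop_append_of_le_length (by simp; omega)]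
      simp [hi]
    have hi' := hp i (i + 1)
    rw [e] at hi'
    exact hi'.eq_of_singleton.symm

end BinaryPartialGroup

/-- If `w ∈ BP_n`, then `w†w ∈ BP_{2n}` with common product `1`. -/
theorem stmt_14 {P : Type*} (G : BinaryPartialGroup P) (w : List P) (a : P)
    (h : IsProd G.toUnitalPartialMagma w a) :
    IsProd G.toUnitalPartialMagma ((w.map G.inv).reverse ++ w) G.one := by
  obtain ⟨q, hq_mul, hq_self, hq_inv, hq_letter⟩ := BinaryPartialGroup.exists_steps h
  refine ⟨fun _ => rfl, fun t ht => ?_⟩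
  have key := evalTree_of_path G.toUnitalPartialMagma q hq_mul t _
    (fun m => (w.length - m) + (m - w.length)) ht (fun m hm => ?_)
  · simpa [hq_self] using key
  · simp only [List.length_append, List.length_reverse, List.length_map] at hm
    rcases lt_or_ge m w.length with hlt | hge
    · rw [List.getElem_append_left (by simpa using hlt), List.getElem_reverse, List.getElem_map]
      simp only [List.length_map]
      rw [← hq_letter, ← hq_inv]
      congr 1 <;> omega
    · rw [List.getElem_append_right (by simpa using hge)]
      simp only [List.length_reverse, List.length_map]
      rw [← hq_letter]
      congr 1 <;> omega
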